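/- Let ψ, γ : ℝ → ℝ be continuous on a neighborhood of 0 with ψ(0) = 1, let ψ be differentiable at 0 with ψ′(0) = ψ₁, and set γ₀ := γ(0). Define, for A ≠ 0 close enough to 0, F(A) := ((1 − exp(−∫₀^A dt/ψ(t)))/A)·exp(∫₀^A γ(t)/ψ(t) dt), and F(0) := 1. Then F is differentiable at 0 with F′(0) = (2γ₀ − 1 − ψ₁)/2. -/

import Mathlib

open Filter Topology

/-- If `f 0 = 0` and `f'`, the derivative of `f` near `0`, has derivative `c` at `0`, then
`x ↦ f x / x`, extended by `f' 0` at `0`, has derivative `c / 2` at `0`. -/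
theorem hasDerivAt_div_self_extend {f f' : ℝ → ℝ} {c : ℝ} (hf0 : f 0 = 0)
    (hf : ∀ᶠ x in 𝓝 0, HasDerivAt f (f' x) x) (hf' : HasDerivAt f' c 0) :
    HasDerivAt (fun x => if x = 0 then f' 0 else f x / x) (c / 2) 0 := by
  rw [hasDerivAt_iff_tendsto_slope]
  have key : Tendsto (fun x => (f x - f' 0 * x) / x ^ 2) (𝓝[≠] 0) (𝓝 (c / 2)) := by
    have hne : ∀ᶠ x : ℝ in 𝓝[≠] 0, x ≠ 0 := eventually_mem_nhdsWithin
    refine HasDerivAt.lhopital_zero_nhdsNE (f' := fun x => f' x - f' 0) (g' := fun x => 2 * x)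
      ?_ ?_ ?_ ?_ ?_ ?_
    · filter_upwards [hf.filter_mono nhdsWithin_le_nhds] with x hx
      simpa using hx.fun_sub ((hasDerivAt_id x).const_mul (f' 0))
    · exact Eventually.of_forall fun x => by simpa using hasDerivAt_pow 2 x
    · filter_upwards [hne] with x hx
      simpa using hx
    · have h : ContinuousAt (fun x => f x - f' 0 * x) 0 :=
        hf.self_of_nhds.continuousAt.sub (by fun_prop)
      simpa [ContinuousAt, hf0] using h.tendsto.mono_left nhdsWithin_le_nhds
    · have h : ContinuousAt (fun x : ℝ => x ^ 2) 0 := by fun_prop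
      simpa using h.tendsto.mono_left nhdsWithin_le_nhds
    · have h := (hasDerivAt_iff_tendsto_slope.1 hf').div_const 2
      refine h.congr' ?_
      filter_upwards [hne] with x hx
      rw [slope_def_field]
      field_simp
      simp
  refine key.congr' ?_
  filter_upwards [eventually_mem_nhdsWithin] with x hx
  have hx : x ≠ 0 := hx
  simp only [slope_def_field, if_neg hx, if_true, sub_zero]
  field_simp

/-- The primitive based at `0` of a function continuous near `0` has the expected derivative
near `0`. -/
theorem eventually_hasDerivAt_integral {g : ℝ → ℝ} (hg : ∀ᶠ x in 𝓝 0, ContinuousAt g x) :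
    ∀ᶠ x in 𝓝 0, HasDerivAt (fun A => ∫ t in (0 : ℝ)..A, g t) (g x) x := by
  obtain ⟨ε, hε, hball⟩ := Metric.eventually_nhds_iff_ball.1 hg
  have hc : ContinuousOn g (Metric.ball 0 ε) := fun x hx => (hball x hx).continuousWithinAt
  filter_upwards [Metric.ball_mem_nhds 0 hε] with x hx
  have hsub : Set.uIcc 0 x ⊆ Metric.ball 0 ε :=
    (convex_ball (0 : ℝ) ε).ordConnected.uIcc_subset (Metric.mem_ball_self hε) hx
  exact intervalIntegral.integral_hasDerivAt_right (hc.mono hsub).intervalIntegrable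
    (hc.stronglyMeasurableAtFilter Metric.isOpen_ball x hx) (hball x hx)


/-- First-order coefficient of the general noncovariant dispersion function: if `ψ, γ` are
continuous on a neighborhood of `0`, `ψ(0) = 1`, and `ψ` is differentiable at `0` with
`ψ′(0) = ψ₁`, then `F(A) = ((1 − exp(−∫₀^A dt/ψ(t)))/A)·exp(∫₀^A γ(t)/ψ(t) dt)` (with
`F(0) = 1`) is differentiable at `0` with `F′(0) = (2γ(0) − 1 − ψ₁)/2`. -/
theorem noncovariant_dispersion_first_order (ψ γ : ℝ → ℝ) (U : Set ℝ)
    (hU : U ∈ nhds (0 : ℝ)) (hψc : ContinuousOn ψ U) (hγc : ContinuousOn γ U)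
    (hψ0 : ψ 0 = 1) (ψ₁ : ℝ) (hψd : HasDerivAt ψ ψ₁ 0) :
    HasDerivAt (fun A : ℝ =>
        if A = 0 then 1 else
          ((1 - Real.exp (-(∫ t in (0 : ℝ)..A, 1 / ψ t))) / A)
            * Real.exp (∫ t in (0 : ℝ)..A, γ t / ψ t))
      ((2 * γ 0 - 1 - ψ₁) / 2) 0 := by
  have hψ : ∀ᶠ x in 𝓝 0, ContinuousAt ψ x ∧ ContinuousAt γ x ∧ ψ x ≠ 0 := by
    filter_upwards [eventually_mem_nhds_iff.2 hU,
      hψd.continuousAt.eventually_ne (by rw [hψ0]; exact one_ne_zero)] with x hx hne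
    exact ⟨hψc.continuousAt hx, hγc.continuousAt hx, hne⟩
  have hI := eventually_hasDerivAt_integral (g := fun t => 1 / ψ t)
    (hψ.mono fun x hx => continuousAt_const.div hx.1 hx.2.2)
  have hJ := eventually_hasDerivAt_integral (g := fun t => γ t / ψ t)
    (hψ.mono fun x hx => hx.2.1.div hx.1 hx.2.2)
  have hH : ∀ᶠ x in 𝓝 0, HasDerivAt
      (fun A => 1 - Real.exp (-(∫ t in (0 : ℝ)..A, 1 / ψ t)))
      (Real.exp (-(∫ t in (0 : ℝ)..x, 1 / ψ t)) * (1 / ψ x)) x := by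
    filter_upwards [hI] with x hx
    simpa using hx.neg.exp.const_sub 1
  have hH' : HasDerivAt
      (fun x => Real.exp (-(∫ t in (0 : ℝ)..x, 1 / ψ t)) * (1 / ψ x)) (-1 - ψ₁) 0 := by
    have h := hI.self_of_nhds.fun_neg.exp.mul
      ((hasDerivAt_const (0 : ℝ) (1 : ℝ)).div hψd (by rw [hψ0]; exact one_ne_zero))
    refine h.congr_deriv ?_
    simp [hψ0]
    ring
  have h := (hasDerivAt_div_self_extend (by simp) hH hH').mul hJ.self_of_nhds.exp
  refine (h.congr_deriv ?_).congr_of_eventuallyEq (Eventually.of_forall fun A => ?_)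
  · simp [hψ0]
    ring
  · by_cases hA : A = 0
    · simp [hA, hψ0]
    · simp [hA]
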